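/- Let T=(V,E) be a directed (rooted or unrooted) tree with generations gen_n (n∈ℕ for rooted trees, n∈ℤ with respect to a fixed vertex for unrooted trees), and let L(V) denote the set of leaves of T. Let f:V→𝕂 be a flow, that is, f(v)=∑_{u∈Chi(v)}f(u) with unconditional convergence for every non-leaf v∈V. Then there exists a finite 𝕂-valued Borel measure μ on the boundary ∂T such that f(v)=μ(∂T_v) for all v∈V if and only if ∑_{v∈L(V)}|f(v)|<∞ and sup_{n≥0}∑_{v∈gen_n}|f(v)|<∞. In that case, μ is uniquely determined by f. -/

import Mathlib

open scoped ENNReal NNReal Topology Classical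
open Filter

namespace PaperTree

/-! ### Directed trees -/

variable {V : Type*}

/-- Iterated parent map of a directed tree given by a parent function. -/
def parIter (par : V → Option V) : ℕ → V → Option V
  | 0, v => some v
  | n + 1, v => (par v).bind (parIter par n)

/-- `par` is the parent function of a (countable, connected, acyclic) directed tree on `V`,
in which every vertex has at most one parent and at most one vertex (the root) has none. -/
structure IsDirectedTree (par : V → Option V) : Prop where
  countable : Countable V
  acyclic : ∀ (v : V) (n : ℕ), 0 < n → parIter par n v ≠ some v
  connected : ∀ u v : V, ∃ (m n : ℕ) (w : V), parIter par m u = some w ∧ parIter par n v = some w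
  root_unique : ∀ u v : V, par u = none → par v = none → u = v

/-- The set of children of `v`. -/
def children (par : V → Option V) (v : V) : Set V := {u : V | par u = some v}

/-- The set of descendants of `v` (including `v`); the rooted subtree `V(v)`. -/
def descendants (par : V → Option V) (v : V) : Set V := {u : V | ∃ n : ℕ, parIter par n u = some v}

def IsLeafV (par : V → Option V) (v : V) : Prop := children par v = ∅

def Leafless (par : V → Option V) : Prop := ∀ v : V, children par v ≠ ∅

def IsRoot (par : V → Option V) (v : V) : Prop := par v = none

def Rooted (par : V → Option V) : Prop := ∃ v : V, IsRoot par v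

def Unrooted (par : V → Option V) : Prop := ∀ v : V, par v ≠ none

/-- The tree has a free left end: some vertex all of whose (proper) ancestors
have exactly one child. -/
def HasFreeLeftEnd (par : V → Option V) : Prop :=
  ∃ v : V, ∀ n : ℕ, 1 ≤ n → ∀ w : V, parIter par n v = some w → ∃! u : V, u ∈ children par w

/-- The tree has finite length (all branches have uniformly bounded length). -/
def FiniteLength (par : V → Option V) : Prop := ∃ m : ℕ, ∀ u : V, parIter par (m + 1) u = none

/-- Product of the weights along the upward path of length `n` ending at `u`;
for `u ∈ Chi^n(v)` this is `λ(v → u)`, and `pathProd par lam n v = λ(par^n(v) → v)`. -/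
def pathProd {𝕜 : Type*} [Monoid 𝕜] (par : V → Option V) (lam : V → 𝕜) : ℕ → V → 𝕜
  | 0, _ => 1
  | n + 1, u => lam u * ((par u).elim 1 (pathProd par lam n))

/-- A (finite or infinite, maximal) branch starting at `v`, encoded with `Option`. -/
def IsOptBranch (par : V → Option V) (v : V) (b : ℕ → Option V) : Prop :=
  b 0 = some v ∧
  (∀ (k : ℕ) (w : V), b k = some w →
      (children par w = ∅ ∧ b (k + 1) = none) ∨ ∃ u ∈ children par w, b (k + 1) = some u) ∧
  ∀ k : ℕ, b k = none → b (k + 1) = none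

/-- An infinite branch starting at `v` (adequate for leafless trees). -/
def IsBranch (par : V → Option V) (v : V) (b : ℕ → V) : Prop :=
  b 0 = v ∧ ∀ k : ℕ, b (k + 1) ∈ children par (b k)

/-- The `[0,∞]`-valued absolute weight associated with a scalar weight. -/
noncomputable def nw {𝕜 : Type*} [RCLike 𝕜] (μ : V → 𝕜) : V → ℝ≥0∞ := fun v => (‖μ v‖₊ : ℝ≥0∞)

/-! ### The boundary of a (rooted or unrooted) directed tree -/

/-- A maximal branch of the tree, encoded as a `ℤ`-indexed partial chain:
consecutive entries are related by the parent map, the domain is an interval,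
nonempty, and the chain extends past every non-leaf. -/
def IsBranchFun (par : V → Option V) (b : ℤ → Option V) : Prop :=
  (∃ n : ℤ, (b n).isSome) ∧
  (∀ (n : ℤ) (w : V), b n = some w → b (n - 1) = par w) ∧
  (∀ (n : ℤ) (w : V), b n = some w → children par w ≠ ∅ → (b (n + 1)).isSome) ∧
  ∀ a x c : ℤ, a ≤ x → x ≤ c → (b a).isSome → (b c).isSome → (b x).isSome

/-- Two branches are identified when they differ by an index shift. -/
def branchSetoid (par : V → Option V) : Setoid {b : ℤ → Option V // IsBranchFun par b} where
  r b c := ∃ k : ℤ, ∀ n : ℤ, b.1 (n + k) = c.1 n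
  iseqv := by
    refine ⟨fun b => ⟨0, fun n => by simp⟩, ?_, ?_⟩
    · rintro b c ⟨k, hk⟩
      refine ⟨-k, fun n => ?_⟩
      have h := hk (n - k)
      have e : n - k + k = n := by ring
      rw [e] at h
      have e2 : n + -k = n - k := by ring
      rw [e2]
      exact h.symm
    · rintro b c d ⟨k, hk⟩ ⟨l, hl⟩
      refine ⟨l + k, fun n => ?_⟩
      have e : n + (l + k) = n + l + k := by ring
      rw [e]
      exact (hk (n + l)).trans (hl n)

/-- The boundary `∂T` of the tree: the set of all (maximal) branches. -/
def TreeBoundary (par : V → Option V) : Type _ := Quotient (branchSetoid par)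

/-- `∂T_v`: the set of branches passing through the vertex `v`. -/
def boundaryThrough (par : V → Option V) (v : V) : Set (TreeBoundary par) :=
  {ζ : TreeBoundary par | ∃ b : {b : ℤ → Option V // IsBranchFun par b},
    Quotient.mk (branchSetoid par) b = ζ ∧ ∃ n : ℤ, b.1 n = some v}

/-- The Borel σ-algebra of `∂T`, generated by the basic (cl)open sets `∂T_v`. -/
instance treeBoundaryMeasurableSpace (par : V → Option V) :
    MeasurableSpace (TreeBoundary par) :=
  MeasurableSpace.generateFrom
    {S : Set (TreeBoundary par) | ∃ v : V, S = boundaryThrough par v}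

open MeasureTheory

theorem parIter_gen {par : V → Option V} {gen : V → ℤ}
    (hgen : ∀ u v : V, par v = some u → gen v = gen u + 1) :
    ∀ (n : ℕ) (v w : V), parIter par n v = some w → gen v = gen w + n
  | 0, v, w, h => by
      simp only [parIter, Option.some.injEq] at h
      simp [h]
  | n + 1, v, w, h => by
      simp only [parIter, Option.bind_eq_some_iff] at h
      obtain ⟨a, ha, hb⟩ := h
      have := parIter_gen hgen n a w hb
      have := hgen a v ha
      push_cast
      omega

theorem parIter_add {par : V → Option V} :
    ∀ (m n : ℕ) (v w x : V), parIter par m v = some w → parIter par n w = some x →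
      parIter par (m + n) v = some x
  | 0, n, v, w, x, h, h' => by
      simp only [parIter, Option.some.injEq] at h
      simpa [h] using h'
  | m + 1, n, v, w, x, h, h' => by
      simp only [parIter, Option.bind_eq_some_iff] at h
      obtain ⟨a, ha, hb⟩ := h
      have := parIter_add m n a w x hb h'
      rw [show m + 1 + n = (m + n) + 1 by ring]
      simp only [parIter, ha, Option.bind_some, this]

theorem mem_children {par : V → Option V} {u v : V} : u ∈ children par v ↔ par u = some v :=
  Iff.rfl

/-- last step of an upward path -/
theorem parIter_last {par : V → Option V} :
    ∀ (n : ℕ) (v w : V), parIter par (n + 1) v = some w →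
      ∃ c, par c = some w ∧ parIter par n v = some c
  | 0, v, w, h => by
      simp only [parIter, Option.bind_eq_some_iff] at h
      obtain ⟨a, ha, hb⟩ := h
      simp only [Option.some.injEq] at hb
      subst hb
      exact ⟨v, ha, rfl⟩
  | n + 1, v, w, h => by
      rw [parIter, Option.bind_eq_some_iff] at h
      obtain ⟨a, ha, hb⟩ := h
      obtain ⟨c, hc, hd⟩ := parIter_last n a w hb
      refine ⟨c, hc, ?_⟩
      simp only [parIter, ha, Option.bind_some, hd]

theorem branch_up {par : V → Option V} {b : ℤ → Option V} (hb : IsBranchFun par b) :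
    ∀ (k : ℕ) (n : ℤ) (v u : V), b n = some v → parIter par k v = some u → b (n - k) = some u
  | 0, n, v, u, h, h' => by
      simp only [parIter, Option.some.injEq] at h'
      simpa [← h'] using h
  | k + 1, n, v, u, h, h' => by
      simp only [parIter, Option.bind_eq_some_iff] at h'
      obtain ⟨a, ha, hc⟩ := h'
      have h1 := hb.2.1 n v h
      rw [ha] at h1
      have := branch_up hb k (n - 1) a u h1 hc
      rw [← this]
      congr 1
      push_cast
      ring

theorem branch_par {par : V → Option V} {b : ℤ → Option V} (hb : IsBranchFun par b) :
    ∀ (k : ℕ) (m : ℤ) (v u : V), b m = some u → b (m + k) = some v → parIter par k v = some u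
  | 0, m, v, u, h, h' => by
      simp only [Nat.cast_zero, add_zero] at h'
      rw [h'] at h
      simpa [parIter] using h
  | k + 1, m, v, u, h, h' => by
      have h1 := hb.2.1 _ v h'
      have h2 : (b (m + k)).isSome := by
        apply hb.2.2.2 m (m + k) (m + ((k + 1 : ℕ) : ℤ)) (by omega) (by push_cast; omega)
        · simp only [h, Option.isSome_some]
        · simp only [h', Option.isSome_some]
      obtain ⟨w, hw⟩ := Option.isSome_iff_exists.1 h2
      have e : m + ((k + 1 : ℕ) : ℤ) - 1 = m + k := by push_cast; ring
      rw [e, hw] at h1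
      have := branch_par hb k m w u h hw
      simp only [parIter, ← h1, Option.bind_some, this]

theorem mk_mem_through {par : V → Option V} (b : {b : ℤ → Option V // IsBranchFun par b}) (v : V) :
    (Quotient.mk (branchSetoid par) b : TreeBoundary par) ∈ boundaryThrough par v ↔
      ∃ n : ℤ, b.1 n = some v := by
  constructor
  · rintro ⟨c, hc, n, hn⟩
    obtain ⟨k, hk⟩ := Quotient.exact hc
    refine ⟨n - k, ?_⟩
    rw [← hk, ← hn, sub_add_cancel]
  · rintro ⟨n, hn⟩
    exact ⟨b, rfl, n, hn⟩

theorem measurableSet_through (par : V → Option V) (v : V) :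
    MeasurableSet (boundaryThrough par v) :=
  MeasurableSpace.measurableSet_generateFrom ⟨v, rfl⟩

theorem through_mono {par : V → Option V} {k : ℕ} {u v : V} (h : parIter par k v = some u) :
    boundaryThrough par v ⊆ boundaryThrough par u := by
  rintro ⟨b⟩ hb
  obtain ⟨n, hn⟩ := (mk_mem_through b v).1 hb
  exact (mk_mem_through b u).2 ⟨_, branch_up b.2 k n v u hn h⟩

theorem through_comparable {par : V → Option V} {u v : V}
    (h : (boundaryThrough par u ∩ boundaryThrough par v).Nonempty) :
    (∃ k, parIter par k v = some u) ∨ (∃ k, parIter par k u = some v) := by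
  obtain ⟨⟨b⟩, h1, h2⟩ := h
  obtain ⟨n, hn⟩ := (mk_mem_through b u).1 h1
  obtain ⟨m, hm⟩ := (mk_mem_through b v).1 h2
  rcases le_total n m with hnm | hnm
  · left
    obtain ⟨k, rfl⟩ := Int.le.dest hnm
    exact ⟨k, branch_par b.2 k n v u hn hm⟩
  · right
    obtain ⟨k, rfl⟩ := Int.le.dest hnm
    exact ⟨k, branch_par b.2 k m u v hm hn⟩

theorem through_disjoint_gen {par : V → Option V} {gen : V → ℤ}
    (hgen : ∀ u v : V, par v = some u → gen v = gen u + 1) {u v : V} (huv : u ≠ v)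
    (h : gen u = gen v) : Disjoint (boundaryThrough par u) (boundaryThrough par v) := by
  rw [Set.disjoint_iff_inter_eq_empty]
  by_contra hne
  rcases through_comparable (Set.nonempty_iff_ne_empty.2 hne) with ⟨k, hk⟩ | ⟨k, hk⟩
  all_goals
    have := parIter_gen hgen _ _ _ hk
    obtain rfl : k = 0 := by omega
    simp only [parIter, Option.some.injEq] at hk
    simp_all

theorem leaf_of_parIter {par : V → Option V} {u v : V} {k : ℕ} (hu : IsLeafV par u)
    (h : parIter par k v = some u) : v = u := by
  cases k with
  | zero => simpa [parIter] using h
  | succ k =>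
    obtain ⟨c, hc, -⟩ := parIter_last k v u h
    have : c ∈ children par u := hc
    rw [hu] at this
    exact this.elim

theorem through_disjoint_leaf {par : V → Option V} {u v : V} (huv : u ≠ v)
    (hu : IsLeafV par u) (hv : IsLeafV par v) :
    Disjoint (boundaryThrough par u) (boundaryThrough par v) := by
  rw [Set.disjoint_iff_inter_eq_empty]
  by_contra hne
  rcases through_comparable (Set.nonempty_iff_ne_empty.2 hne) with ⟨k, hk⟩ | ⟨k, hk⟩
  · exact huv (leaf_of_parIter hu hk).symm
  · exact huv (leaf_of_parIter hv hk)

theorem isPiSystem_through (par : V → Option V) :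
    IsPiSystem {S : Set (TreeBoundary par) | ∃ v : V, S = boundaryThrough par v} := by
  rintro _ ⟨u, rfl⟩ _ ⟨v, rfl⟩ hne
  rcases through_comparable hne with ⟨k, hk⟩ | ⟨k, hk⟩
  · exact ⟨v, Set.inter_eq_right.2 (through_mono hk)⟩
  · exact ⟨u, Set.inter_eq_left.2 (through_mono hk)⟩

theorem iUnion_ancestors {par : V → Option V} (hTree : IsDirectedTree par) (v₀ : V) :
    (⋃ n : ℕ, ⋃ j : Fin (n + 1), ⋃ w : {w : V // parIter par j v₀ = some w},
      boundaryThrough par w.1) = Set.univ := by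
  rw [Set.eq_univ_iff_forall]
  rintro ⟨b⟩
  obtain ⟨n, hn⟩ := b.2.1
  obtain ⟨u, hu⟩ := Option.isSome_iff_exists.1 hn
  obtain ⟨m, k, w, h1, h2⟩ := hTree.connected u v₀
  refine Set.mem_iUnion.2 ⟨k, Set.mem_iUnion.2 ⟨⟨k, by omega⟩,
    Set.mem_iUnion.2 ⟨⟨w, h2⟩, (mk_mem_through b w).2 ⟨_, branch_up b.2 m n u w hu h1⟩⟩⟩⟩

theorem unique_measure {𝕜 : Type*} [RCLike 𝕜] {par : V → Option V} (hTree : IsDirectedTree par)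
    (v₀ : V) (m₁ m₂ : VectorMeasure (TreeBoundary par) 𝕜)
    (h : ∀ v, m₁ (boundaryThrough par v) = m₂ (boundaryThrough par v)) : m₁ = m₂ := by
  have := hTree.countable
  refine VectorMeasure.ext_of_generateFrom _ ?_ rfl (isPiSystem_through par) ?_
  · rintro _ ⟨v, rfl⟩
    exact h v
  let A : ℕ → Set (TreeBoundary par) := fun n => ⋃ j : Fin (n + 1),
    ⋃ w : {w : V // parIter par j v₀ = some w}, boundaryThrough par w.1
  have hA : (⋃ n, A n) = Set.univ := iUnion_ancestors hTree v₀
  have hm : Monotone A := by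
    intro a b hab x hx
    simp only [A, Set.mem_iUnion] at hx ⊢
    obtain ⟨j, w, hw⟩ := hx
    exact ⟨⟨j, by omega⟩, w, hw⟩
  have hs : ∀ n, MeasurableSet (A n) := fun n =>
    MeasurableSet.iUnion fun j => MeasurableSet.iUnion fun w => measurableSet_through par _
  have key : ∀ n, ∃ v, A n = boundaryThrough par v := by
    intro n
    induction n with
    | zero =>
      refine ⟨v₀, ?_⟩
      ext x
      simp only [A, Set.mem_iUnion]
      constructor
      · rintro ⟨j, ⟨w, hw⟩, hx⟩
        obtain ⟨j, hj⟩ := j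
        obtain rfl : j = 0 := by omega
        simp only [parIter, Option.some.injEq] at hw
        rwa [hw]
      · intro hx
        exact ⟨0, ⟨v₀, rfl⟩, hx⟩
    | succ n ih =>
      cases hp : parIter par (n + 1) v₀ with
      | none =>
        obtain ⟨v, hv⟩ := ih
        refine ⟨v, ?_⟩
        rw [← hv]
        refine le_antisymm ?_ (hm (Nat.le_succ n))
        intro x hx
        simp only [A, Set.mem_iUnion] at hx ⊢
        obtain ⟨⟨j, hj⟩, ⟨w, hw⟩, hx⟩ := hx
        rcases Nat.lt_or_ge j (n + 1) with h1 | h1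
        · exact ⟨⟨j, h1⟩, ⟨w, hw⟩, hx⟩
        · obtain rfl : j = n + 1 := by omega
          simp [hp] at hw
      | some w =>
        refine ⟨w, le_antisymm ?_ ?_⟩
        · obtain ⟨v, hv⟩ := ih
          intro x hx
          simp only [A, Set.mem_iUnion] at hx
          obtain ⟨⟨j, hj⟩, ⟨u, hu⟩, hx⟩ := hx
          simp only at hu hx
          have : ∀ (i : ℕ) (j : ℕ) (u : V), parIter par j v₀ = some u →
              parIter par (j + i) v₀ = some w → parIter par i u = some w := by
            intro i
            induction i with
            | zero =>
              intro j u h1 h2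
              simp only [add_zero, h1] at h2
              simpa [parIter] using h2
            | succ i ih =>
              intro j u h1 h2
              cases hq : par u with
              | none =>
                exfalso
                have : ∀ (j : ℕ) (v : V), parIter par j v = some u →
                    parIter par (j + (i + 1)) v = none := by
                  intro j
                  induction j with
                  | zero =>
                    intro v hv
                    simp only [parIter, Option.some.injEq] at hv
                    rw [zero_add, parIter, hv, hq]
                    rfl
                  | succ j ihj =>
                    intro v hv
                    simp only [parIter, Option.bind_eq_some_iff] at hv
                    obtain ⟨a, ha, hb⟩ := hv
                    rw [show j + 1 + (i + 1) = (j + (i + 1)) + 1 by ring, parIter, ha]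
                    exact ihj a hb
                rw [this j v₀ h1] at h2
                simp at h2
              | some p =>
                rw [parIter, hq]
                refine ih (j + 1) p (parIter_add j 1 v₀ u p h1 (by simp [parIter, hq])) ?_
                rw [← h2]
                congr 1
                ring
          refine through_mono (this (n + 1 - j) j u hu ?_) hx
          rw [← hp]
          congr 1
          omega
        · intro x hx
          simp only [A, Set.mem_iUnion]
          exact ⟨⟨n + 1, by omega⟩, ⟨w, hp⟩, hx⟩
  have t1 := VectorMeasure.tendsto_vectorMeasure_iUnion_atTop_nat (v := m₁) hm hs
  have t2 := VectorMeasure.tendsto_vectorMeasure_iUnion_atTop_nat (v := m₂) hm hs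
  rw [hA] at t1 t2
  refine tendsto_nhds_unique t1 ?_
  convert t2 using 2 with n
  obtain ⟨v, hv⟩ := key n
  rw [hv, h v]

theorem signed_bound {X : Type*} [MeasurableSpace X] (s : SignedMeasure X) {A : Set X}
    (hA : MeasurableSet A) : (‖s A‖₊ : ℝ≥0∞) ≤ s.totalVariation A := by
  rw [s.apply_eq_posPart_real_sub_negPart_real hA, SignedMeasure.totalVariation]
  rw [Measure.coe_add, Pi.add_apply, ← enorm_eq_nnnorm]
  refine (enorm_sub_le).trans (add_le_add ?_ ?_)
  all_goals
    rw [Real.enorm_eq_ofReal measureReal_nonneg, ofReal_measureReal]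

theorem vector_bound {𝕜 : Type*} [RCLike 𝕜] {X : Type*} [MeasurableSpace X]
    (m : VectorMeasure X 𝕜) : ∃ μ : Measure X, IsFiniteMeasure μ ∧
      ∀ A, MeasurableSet A → (‖m A‖₊ : ℝ≥0∞) ≤ μ A := by
  let s : SignedMeasure X := m.mapRange (RCLike.re : 𝕜 →+ ℝ) RCLike.continuous_re
  let t : SignedMeasure X := m.mapRange (RCLike.im : 𝕜 →+ ℝ) RCLike.continuous_im
  refine ⟨s.totalVariation + t.totalVariation, inferInstance, fun A hA => ?_⟩
  have h1 := signed_bound s hA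
  have h2 := signed_bound t hA
  rw [Measure.coe_add, Pi.add_apply]
  refine le_trans ?_ (add_le_add h1 h2)
  rw [← ENNReal.coe_add, ENNReal.coe_le_coe, ← NNReal.coe_le_coe]
  push_cast
  have : m A = ((s A : ℝ) : 𝕜) + ((t A : ℝ) : 𝕜) * RCLike.I := (RCLike.re_add_im (m A)).symm
  rw [this]
  refine (norm_add_le _ _).trans ?_
  rw [norm_mul, RCLike.norm_ofReal, RCLike.norm_ofReal]
  have h3 : ‖(RCLike.I : 𝕜)‖ ≤ 1 := by
    by_cases h : (RCLike.I : 𝕜) = 0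
    · simp [h]
    · exact (RCLike.norm_I_of_ne_zero h).le
  exact add_le_add le_rfl (mul_le_of_le_one_right (abs_nonneg _) h3)

theorem necessity {𝕜 : Type*} [RCLike 𝕜] {par : V → Option V} 
    {gen : V → ℤ} (hgen : ∀ u v : V, par v = some u → gen v = gen u + 1)
    {f : V → 𝕜} (m : VectorMeasure (TreeBoundary par) 𝕜)
    (hm : ∀ v : V, m (boundaryThrough par v) = f v) :
    ((∑' v : {v : V // IsLeafV par v}, (‖f v.1‖₊ : ℝ≥0∞)) < ⊤ ∧
        (⨆ n : ℕ, ∑' v : {v : V // gen v = (n : ℤ)}, (‖f v.1‖₊ : ℝ≥0∞)) < ⊤) := by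
  obtain ⟨μ, hμ, hb⟩ := vector_bound m
  have hle : ∀ v, (‖f v‖₊ : ℝ≥0∞) ≤ μ (boundaryThrough par v) := fun v => by
    rw [← hm]
    exact hb _ (measurableSet_through par v)
  constructor
  · refine lt_of_le_of_lt ((ENNReal.tsum_le_tsum fun v => hle (Subtype.val v)).trans
      (tsum_measure_le_measure_univ (fun v => (measurableSet_through par _).nullMeasurableSet) ?_))
      (measure_lt_top μ Set.univ)
    intro u v huv
    exact (through_disjoint_leaf (fun h => huv (Subtype.ext h)) u.2 v.2).aedisjoint
  · refine lt_of_le_of_lt (iSup_le fun n => (ENNReal.tsum_le_tsum fun v => hle (Subtype.val v)).trans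
      (tsum_measure_le_measure_univ (fun v => (measurableSet_through par _).nullMeasurableSet) ?_))
      (measure_lt_top μ Set.univ)
    intro u v huv
    exact (through_disjoint_gen hgen (fun h => huv (Subtype.ext h))
      (u.2.trans v.2.symm)).aedisjoint

theorem parIter_bind {par : V → Option V} :
    ∀ (m n : ℕ) (v : V), parIter par (m + n) v = (parIter par m v).bind (parIter par n)
  | 0, n, v => by simp [parIter]
  | m + 1, n, v => by
      rw [show m + 1 + n = (m + n) + 1 by ring, parIter, parIter]
      cases par v with
      | none => rfl
      | some p => simpa using parIter_bind m n p

theorem mem_of_parIter {par : V → Option V} {I : V → Set ℝ}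
    (hsub : ∀ u w, par u = some w → I u ⊆ I w) :
    ∀ (n : ℕ) (v w : V), parIter par n v = some w → I v ⊆ I w
  | 0, v, w, h => by
      simp only [parIter, Option.some.injEq] at h
      rw [h]
  | n + 1, v, w, h => by
      simp only [parIter, Option.bind_eq_some_iff] at h
      obtain ⟨a, ha, hb⟩ := h
      exact (hsub v a ha).trans (mem_of_parIter hsub n a w hb)

theorem eq_of_parIter {par : V → Option V} {I : V → Set ℝ}
    (hsub : ∀ u w, par u = some w → I u ⊆ I w)
    (huniq : ∀ u v w, par u = some w → par v = some w → ∀ x, x ∈ I u → x ∈ I v → u = v) (x : ℝ) :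
    ∀ (n : ℕ) (u v w : V), parIter par n u = some w → parIter par n v = some w →
      x ∈ I u → x ∈ I v → u = v
  | 0, u, v, w, h, h', _, _ => by
      simp only [parIter, Option.some.injEq] at h h'
      rw [h, h']
  | n + 1, u, v, w, h, h', hu, hv => by
      simp only [parIter, Option.bind_eq_some_iff] at h h'
      obtain ⟨a, ha, hb⟩ := h
      obtain ⟨c, hc, hd⟩ := h'
      obtain rfl := eq_of_parIter hsub huniq x n a c w hb hd (hsub _ _ ha hu) (hsub _ _ hc hv)
      exact huniq u v a ha hc x hu hv

theorem exists_branch {par : V → Option V} (hTree : IsDirectedTree par)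
    {gen : V → ℤ} (hgen : ∀ u v : V, par v = some u → gen v = gen u + 1)
    {I : V → Set ℝ} (hsub : ∀ u w, par u = some w → I u ⊆ I w)
    (hex : ∀ w x, x ∈ I w → children par w ≠ ∅ → ∃ u, par u = some w ∧ x ∈ I u)
    (huniq : ∀ u v w, par u = some w → par v = some w → ∀ x, x ∈ I u → x ∈ I v → u = v)
    (x : ℝ) (hx : ∃ v, x ∈ I v) :
    ∃ ζ : TreeBoundary par, ∀ v, ζ ∈ boundaryThrough par v ↔ x ∈ I v := by
  let b : ℤ → Option V := fun n =>
    if h : ∃ v, x ∈ I v ∧ gen v = n then some h.choose else none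
  have hb : ∀ n v, b n = some v ↔ x ∈ I v ∧ gen v = n := by
    intro n v
    by_cases h : ∃ v, x ∈ I v ∧ gen v = n
    · have e : b n = some h.choose := dif_pos h
      have hs := h.choose_spec
      rw [e, Option.some.injEq]
      constructor
      · intro h'
        rw [← h']
        exact hs
      · rintro ⟨h1, h2⟩
        obtain ⟨m, k, w, hm, hk⟩ := hTree.connected h.choose v
        have e1 := parIter_gen hgen _ _ _ hm
        have e2 := parIter_gen hgen _ _ _ hk
        obtain rfl : m = k := by omega
        exact eq_of_parIter hsub huniq x m _ _ w hm hk hs.1 h1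
    · have e : b n = none := dif_neg h
      rw [e]
      simp only [reduceCtorEq, false_iff]
      exact fun h' => h ⟨v, h'⟩
  have hB : IsBranchFun par b := by
    refine ⟨?_, ?_, ?_, ?_⟩
    · obtain ⟨v, hv⟩ := hx
      refine ⟨gen v, ?_⟩
      rw [(hb (gen v) v).2 ⟨hv, rfl⟩]
      rfl
    · intro n w hw
      obtain ⟨h1, h2⟩ := (hb n w).1 hw
      cases hp : par w with
      | some p =>
        refine (hb _ _).2 ⟨hsub _ _ hp h1, ?_⟩
        have := hgen _ _ hp
        omega
      | none =>
        cases hq : b (n - 1) with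
        | none => rfl
        | some u =>
          exfalso
          obtain ⟨h3, h4⟩ := (hb _ u).1 hq
          obtain ⟨m, k, z, hm, hk⟩ := hTree.connected w u
          have e1 := parIter_gen hgen _ _ _ hm
          have e2 := parIter_gen hgen _ _ _ hk
          cases m with
          | zero => omega
          | succ m => simp [parIter, hp] at hm
    · intro n w hw hc
      obtain ⟨h1, h2⟩ := (hb n w).1 hw
      obtain ⟨u, hu, hu'⟩ := hex w x h1 hc
      rw [(hb (n + 1) u).2 ⟨hu', by rw [hgen _ _ hu, h2]⟩]
      rfl
    · intro a y c hay hyc ha hc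
      obtain ⟨u, hu⟩ := Option.isSome_iff_exists.1 ha
      obtain ⟨v, hv⟩ := Option.isSome_iff_exists.1 hc
      obtain ⟨hu1, hu2⟩ := (hb _ _).1 hu
      obtain ⟨hv1, hv2⟩ := (hb _ _).1 hv
      obtain ⟨m, k, w, hm, hk⟩ := hTree.connected u v
      have e1 := parIter_gen hgen _ _ _ hm
      have e2 := parIter_gen hgen _ _ _ hk
      obtain ⟨i, hi⟩ := Int.le.dest hyc
      obtain ⟨j, rfl⟩ : ∃ j, k = i + j := ⟨k - i, by omega⟩
      rw [parIter_bind, Option.bind_eq_some_iff] at hk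
      obtain ⟨z, hz, -⟩ := hk
      have e3 := parIter_gen hgen _ _ _ hz
      rw [(hb y z).2 ⟨mem_of_parIter hsub _ _ _ hz hv1, by omega⟩]
      rfl
  refine ⟨Quotient.mk (branchSetoid par) ⟨b, hB⟩, fun v => ?_⟩
  refine (mk_mem_through ⟨b, hB⟩ v).trans ?_
  constructor
  · rintro ⟨n, hn⟩
    exact ((hb n v).1 hn).1
  · intro hv
    exact ⟨gen v, (hb _ _).2 ⟨hv, rfl⟩⟩

theorem measure_of_sets {par : V → Option V} (hTree : IsDirectedTree par)
    {gen : V → ℤ} (hgen : ∀ u v : V, par v = some u → gen v = gen u + 1)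
    {I : V → Set ℝ} (hmeas : ∀ v, MeasurableSet (I v))
    (hsub : ∀ u w, par u = some w → I u ⊆ I w)
    (hex : ∀ w x, x ∈ I w → children par w ≠ ∅ → ∃ u, par u = some w ∧ x ∈ I u)
    (huniq : ∀ u v w, par u = some w → par v = some w → ∀ x, x ∈ I u → x ∈ I v → u = v)
    (C : ℝ) (hC : ∀ v, I v ⊆ Set.Ico 0 C) :
    ∃ μ : Measure (TreeBoundary par), IsFiniteMeasure μ ∧
      ∀ v, μ (boundaryThrough par v) = volume (I v) := by
  have := hTree.countable
  let U : Set ℝ := ⋃ v, I v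
  have hU : MeasurableSet U := MeasurableSet.iUnion hmeas
  have H : ∀ x : U, ∃ ζ : TreeBoundary par, ∀ v, ζ ∈ boundaryThrough par v ↔ x.1 ∈ I v :=
    fun x => exists_branch hTree hgen hsub hex huniq x.1 (Set.mem_iUnion.1 x.2)
  choose φ hφ using H
  have hpre : ∀ v, φ ⁻¹' boundaryThrough par v = Subtype.val ⁻¹' I v := by
    intro v
    ext x
    exact hφ x v
  have hφm : Measurable φ := by
    refine measurable_generateFrom ?_
    rintro _ ⟨v, rfl⟩
    rw [hpre]
    exact measurable_subtype_coe (hmeas v)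
  refine ⟨(Measure.comap Subtype.val volume).map φ, ⟨?_⟩, fun v => ?_⟩
  · rw [Measure.map_apply hφm MeasurableSet.univ, comap_subtype_coe_apply hU]
    have : volume (Set.Ico (0 : ℝ) C) < ⊤ := measure_Ico_lt_top
    refine lt_of_le_of_lt (measure_mono ?_) this
    rintro _ ⟨x, -, rfl⟩
    obtain ⟨v, hv⟩ := Set.mem_iUnion.1 x.2
    exact hC v hv
  · rw [Measure.map_apply hφm (measurableSet_through par v), comap_subtype_coe_apply hU, hpre,
      Subtype.image_preimage_coe, Set.inter_eq_right.2 (Set.subset_iUnion I v)]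

/-- partial sums of a family along an enumeration -/
noncomputable def cum {ι : Type*} (r : ι → ℕ) (g : ι → ℝ) (n : ℕ) : ℝ :=
  ∑ k ∈ Finset.range n, Function.extend r g 0 k

theorem ext_nonneg {ι : Type*} {r : ι → ℕ} {g : ι → ℝ} (hg : ∀ i, 0 ≤ g i)
    (hr : Function.Injective r) (k : ℕ) : 0 ≤ Function.extend r g 0 k := by
  by_cases h : ∃ i, r i = k
  · obtain ⟨i, rfl⟩ := h
    rw [hr.extend_apply]
    exact hg i
  · rw [Function.extend_apply' _ _ _ h]
    rfl

theorem cum_mono {ι : Type*} {r : ι → ℕ} {g : ι → ℝ} (hg : ∀ i, 0 ≤ g i)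
    (hr : Function.Injective r) : Monotone (cum r g) := by
  refine monotone_nat_of_le_succ fun n => ?_
  rw [cum, cum, Finset.sum_range_succ]
  linarith [ext_nonneg hg hr n]

theorem cum_succ {ι : Type*} {r : ι → ℕ} {g : ι → ℝ}
    (hr : Function.Injective r) (i : ι) : cum r g (r i + 1) = cum r g (r i) + g i := by
  rw [cum, Finset.sum_range_succ, hr.extend_apply, cum]

theorem cum_le {ι : Type*} {r : ι → ℕ} {g : ι → ℝ} (hg : ∀ i, 0 ≤ g i)
    (hr : Function.Injective r) {S : ℝ} (hS : HasSum g S) (n : ℕ) : cum r g n ≤ S := by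
  have := (hasSum_extend_zero hr).2 hS
  exact sum_le_hasSum _ (fun i _ => ext_nonneg hg hr i) this

theorem cum_exists {ι : Type*} {r : ι → ℕ} {g : ι → ℝ} 
    (hr : Function.Injective r) {S : ℝ} (hS : HasSum g S) {x : ℝ} (hx : 0 ≤ x) (hxS : x < S) :
    ∃ i, cum r g (r i) ≤ x ∧ x < cum r g (r i) + g i := by
  have h1 := (hasSum_extend_zero hr).2 hS
  have h2 := h1.tendsto_sum_nat.eventually (lt_mem_nhds hxS)
  have h3 : ∃ n, x < cum r g n := h2.exists
  have h4 := Nat.find_spec h3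
  have h5 := fun m => Nat.find_min h3 (m := m)
  cases hn : Nat.find h3 with
  | zero =>
    rw [hn] at h4
    simp [cum] at h4
    linarith
  | succ k =>
    rw [hn] at h4 h5
    have h6 := not_lt.1 (h5 k (Nat.lt_succ_self k))
    by_cases h : ∃ i, r i = k
    · obtain ⟨i, rfl⟩ := h
      exact ⟨i, h6, by rwa [← cum_succ hr]⟩
    · exfalso
      rw [cum, Finset.sum_range_succ, Function.extend_apply' _ _ _ h] at h4
      simp only [Pi.zero_apply, add_zero] at h4
      exact absurd h4 (not_lt.2 h6)

theorem cum_unique {ι : Type*} {r : ι → ℕ} {g : ι → ℝ} (hg : ∀ i, 0 ≤ g i)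
    (hr : Function.Injective r) {x : ℝ} {i j : ι} (h1 : cum r g (r i) ≤ x)
    (h2 : x < cum r g (r i) + g i) (h3 : cum r g (r j) ≤ x)
    (h4 : x < cum r g (r j) + g j) : i = j := by
  rw [← cum_succ hr] at h2 h4
  have a1 : r j < r i + 1 := by
    by_contra h
    linarith [cum_mono hg hr (not_lt.1 h)]
  have a2 : r i < r j + 1 := by
    by_contra h
    linarith [cum_mono hg hr (not_lt.1 h)]
  exact hr (by omega)

theorem exists_measure {par : V → Option V} (hTree : IsDirectedTree par)
    {gen : V → ℤ} (hgen : ∀ u v : V, par v = some u → gen v = gen u + 1) (v₀ : V)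
    (h : V → ℝ) (h0 : ∀ v, 0 ≤ h v) (C : ℝ) (hC : ∀ v, h v ≤ C)
    (hflow : ∀ v : V, children par v ≠ ∅ →
      HasSum (fun u : ↥(children par v) => h u.1) (h v)) :
    ∃ μ : Measure (TreeBoundary par), IsFiniteMeasure μ ∧
      ∀ v, μ (boundaryThrough par v) = ENNReal.ofReal (h v) := by
  have := hTree.countable
  obtain ⟨e, he⟩ := exists_injective_nat V
  let Anc : V → Prop := fun w => ∃ n, parIter par n v₀ = some w
  have hAncpar : ∀ w p, Anc w → par w = some p → Anc p := by
    rintro w p ⟨n, hn⟩ hp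
    exact ⟨n + 1, parIter_add n 1 v₀ w p hn (by simp [parIter, hp])⟩
  let rank : V → ℕ := fun v => if Anc v then 0 else e v + 1
  have hrank : ∀ w, Function.Injective (fun u : ↥(children par w) => rank u.1) := by
    rintro w ⟨u, hu⟩ ⟨v, hv⟩ huv
    simp only [rank] at huv
    apply Subtype.ext
    simp only
    by_cases h1 : Anc u <;> by_cases h2 : Anc v
    · obtain ⟨m, hm⟩ := h1
      obtain ⟨n, hn⟩ := h2
      have e1 := parIter_gen hgen _ _ _ hm
      have e2 := parIter_gen hgen _ _ _ hn
      have e3 := hgen _ _ hu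
      have e4 := hgen _ _ hv
      obtain rfl : m = n := by omega
      rw [hm] at hn
      exact Option.some.inj hn
    · simp [h1, h2] at huv
    · simp [h1, h2] at huv
    · simp only [h1, h2, if_false] at huv
      exact he (by omega)
  let off : V → ℝ := fun v => (par v).elim 0 fun w =>
    cum (fun u : ↥(children par w) => rank u.1) (fun u => h u.1) (rank v)
  have hoff0 : ∀ v, Anc v → off v = 0 := by
    intro v hv
    simp only [off, rank, hv, if_true]
    cases par v with
    | none => rfl
    | some w => simp [cum]
  let F : V → ℕ → ℝ := fun v n => (parIter par n v).elim 0 off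
  let a : V → ℝ := fun v => ∑' n, F v n
  have hAncIter : ∀ n w, Anc w → F w n = 0 := by
    intro n
    induction n with
    | zero => intro w hw; exact hoff0 w hw
    | succ n ih =>
      intro w hw
      simp only [F, parIter]
      cases hp : par w with
      | none => rfl
      | some p => exact ih p (hAncpar w p hw hp)
  have ha0 : ∀ w, Anc w → a w = 0 := by
    intro w hw
    simp only [a, hAncIter _ w hw, tsum_zero]
  have hcommon : ∀ v, ∃ N w, parIter par N v = some w ∧ Anc w := by
    intro v
    obtain ⟨m, n, w, h1, h2⟩ := hTree.connected v v₀
    exact ⟨m, w, h1, n, h2⟩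
  have hsumm : ∀ v, Summable (F v) := by
    intro v
    obtain ⟨N, w, hN, hw⟩ := hcommon v
    refine summable_of_ne_finset_zero (s := Finset.range N) fun n hn => ?_
    obtain ⟨i, rfl⟩ : ∃ i, n = N + i := ⟨n - N, by simp at hn; omega⟩
    have := hAncIter i w hw
    simp only [F] at this ⊢
    rw [parIter_bind, hN]
    exact this
  have hastep : ∀ v w, par v = some w → a v = a w +
      cum (fun u : ↥(children par w) => rank u.1) (fun u => h u.1) (rank v) := by
    intro v w hw
    simp only [a]
    rw [(hsumm v).tsum_eq_zero_add, add_comm]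
    congr 1
    · refine tsum_congr fun n => ?_
      simp only [F, parIter, hw, Option.bind_some]
    · simp only [F, off, parIter, hw, Option.elim_some]
  have hne : ∀ u w, par u = some w → children par w ≠ ∅ := fun u w hu =>
    Set.nonempty_iff_ne_empty.1 ⟨u, hu⟩
  let I : V → Set ℝ := fun v => Set.Ico (a v) (a v + h v)
  have hsub : ∀ u w, par u = some w → I u ⊆ I w := by
    intro u w hu
    have hf := hflow w (hne u w hu)
    have e1 := hastep u w hu
    have e2 := cum_mono (fun i : ↥(children par w) => h0 i.1) (hrank w) (Nat.zero_le (rank u))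
    have e3 := cum_le (fun i : ↥(children par w) => h0 i.1) (hrank w) hf (rank u + 1)
    have e4 := cum_succ (g := fun i : ↥(children par w) => h i.1) (hrank w) ⟨u, hu⟩
    simp only at e4
    have e5 : cum (fun u : ↥(children par w) => rank u.1) (fun u => h u.1) 0 = 0 := by simp [cum]
    exact Set.Ico_subset_Ico (by linarith) (by linarith)
  obtain ⟨μ, hμ, hμ'⟩ := measure_of_sets hTree hgen (I := I) (fun v => measurableSet_Ico) hsub
    (by
      rintro w x ⟨hx1, hx2⟩ hc
      obtain ⟨u, hu1, hu2⟩ := cum_exists (hrank w) (hflow w hc) (x := x - a w)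
        (by linarith) (by linarith)
      have e1 := hastep u.1 w u.2
      exact ⟨u.1, u.2, by linarith, by linarith⟩)
    (by
      rintro u v w hu hv x ⟨hx1, hx2⟩ ⟨hx3, hx4⟩
      have e1 := hastep u w hu
      have e2 := hastep v w hv
      have := cum_unique (g := fun i : ↥(children par w) => h i.1) (fun i => h0 i.1) (hrank w)
        (i := ⟨u, hu⟩) (j := ⟨v, hv⟩) (x := x - a w)
        (by simp only; linarith) (by simp only; linarith) (by simp only; linarith)
        (by simp only; linarith)
      exact congrArg Subtype.val this)
    C
    (by
      intro v
      obtain ⟨N, w, hN, hw⟩ := hcommon v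
      refine (mem_of_parIter hsub N v w hN).trans ?_
      simp only [I, ha0 w hw, zero_add]
      exact Set.Ico_subset_Ico le_rfl (hC w))
  refine ⟨μ, hμ, fun v => ?_⟩
  rw [hμ', Real.volume_Ico]
  congr 1
  ring

/-- level-`n` variation of `f` below `v` -/
noncomputable def tv {𝕜 : Type*} [RCLike 𝕜] (par : V → Option V) (f : V → 𝕜) : ℕ → V → ℝ≥0∞
  | 0, v => ‖f v‖ₑ
  | n + 1, v => if children par v = ∅ then ‖f v‖ₑ else ∑' u : ↥(children par v), tv par f n u.1

theorem enorm_le_tsum {ι 𝕜 : Type*} [RCLike 𝕜] {g : ι → 𝕜} {S : 𝕜} (hS : HasSum g S) :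
    ‖S‖ₑ ≤ ∑' i, ‖g i‖ₑ := by
  have h1 : Tendsto (fun s : Finset ι => ‖∑ i ∈ s, g i‖ₑ) atTop (𝓝 ‖S‖ₑ) :=
    (continuous_enorm.tendsto S).comp hS
  exact le_of_tendsto' h1 fun s => (enorm_sum_le s g).trans (ENNReal.sum_le_tsum s)

theorem tv_mono {𝕜 : Type*} [RCLike 𝕜] {par : V → Option V} {f : V → 𝕜}
    (hflow : ∀ v : V, children par v ≠ ∅ →
      HasSum (fun u : ↥(children par v) => f u.1) (f v)) :
    ∀ n v, tv par f n v ≤ tv par f (n + 1) v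
  | 0, v => by
      rw [tv, tv]
      split_ifs with h
      · exact le_rfl
      · exact enorm_le_tsum (hflow v h)
  | n + 1, v => by
      rw [tv, tv]
      split_ifs with h
      · exact le_rfl
      · exact ENNReal.tsum_le_tsum fun u => tv_mono hflow n u.1

theorem tv_bound {𝕜 : Type*} [RCLike 𝕜] {par : V → Option V} {f : V → 𝕜}
    {gen : V → ℤ} (hgen : ∀ u v : V, par v = some u → gen v = gen u + 1) :
    ∀ (n : ℕ) (v : V), tv par f n v ≤ ∑' u : V,
      if (∃ k, parIter par k u = some v) ∧ (IsLeafV par u ∨ gen u = gen v + n) then ‖f u‖ₑ else 0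
  | 0, v => by
      rw [tv]
      refine le_trans (le_of_eq ?_) (ENNReal.le_tsum v)
      rw [if_pos]
      exact ⟨⟨0, rfl⟩, Or.inr (by simp)⟩
  | n + 1, v => by
      rw [tv]
      split_ifs with h
      · refine le_trans (le_of_eq ?_) (ENNReal.le_tsum v)
        rw [if_pos]
        exact ⟨⟨0, rfl⟩, Or.inl h⟩
      · refine (ENNReal.tsum_le_tsum fun u => tv_bound hgen n (Subtype.val u)).trans ?_
        rw [ENNReal.tsum_comm]
        refine ENNReal.tsum_le_tsum fun u => ?_
        by_cases hex : ∃ c : ↥(children par v), ∃ k, parIter par k u = some c.1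
        · obtain ⟨c, k, hk⟩ := hex
          rw [tsum_eq_single c]
          · by_cases hc : (∃ k, parIter par k u = some c.1) ∧
              (IsLeafV par u ∨ gen u = gen c.1 + n)
            · rw [if_pos hc, if_pos]
              refine ⟨⟨k + 1, parIter_add k 1 u c.1 v hk (by
                have := c.2
                rw [mem_children] at this
                simp [parIter, this])⟩, ?_⟩
              refine hc.2.imp id fun h' => ?_
              have := hgen _ _ c.2
              push_cast
              omega
            · rw [if_neg hc]
              exact zero_le
          · intro d hd
            rw [if_neg]
            rintro ⟨⟨j, hj⟩, -⟩
            apply hd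
            have e1 := parIter_gen hgen _ _ _ hk
            have e2 := parIter_gen hgen _ _ _ hj
            have e3 := hgen _ _ c.2
            have e4 := hgen _ _ d.2
            obtain rfl : j = k := by omega
            rw [hk] at hj
            exact Subtype.ext (Option.some.inj hj).symm
        · have : ∀ c : ↥(children par v), (if (∃ k, parIter par k u = some c.1) ∧
              (IsLeafV par u ∨ gen u = gen c.1 + n) then ‖f u‖ₑ else 0) = 0 := by
            intro c
            rw [if_neg]
            exact fun h' => hex ⟨c, h'.1⟩
          simp only [this, tsum_zero]
          exact zero_le

theorem tsum_iSup_mono {ι : Type*} {F : ℕ → ι → ℝ≥0∞} (hF : Monotone F) :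
    ∑' i, ⨆ n, F n i = ⨆ n, ∑' i, F n i := by
  apply le_antisymm
  · rw [ENNReal.tsum_eq_iSup_sum]
    refine iSup_le fun s => ?_
    rw [ENNReal.finsetSum_iSup_of_monotone (fun i a b hab => hF hab i)]
    exact iSup_mono fun n => ENNReal.sum_le_tsum s
  · exact iSup_le fun n => ENNReal.tsum_le_tsum fun i => le_iSup (fun n => F n i) n

theorem exists_dominating {𝕜 : Type*} [RCLike 𝕜] {par : V → Option V}
    {gen : V → ℤ} (hgen : ∀ u v : V, par v = some u → gen v = gen u + 1)
    {f : V → 𝕜} (hflow : ∀ v : V, children par v ≠ ∅ →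
      HasSum (fun u : ↥(children par v) => f u.1) (f v))
    (h1 : (∑' v : {v : V // IsLeafV par v}, (‖f v.1‖₊ : ℝ≥0∞)) < ⊤)
    (h2 : (⨆ n : ℕ, ∑' v : {v : V // gen v = (n : ℤ)}, (‖f v.1‖₊ : ℝ≥0∞)) < ⊤) :
    ∃ (g : V → ℝ) (C : ℝ), (∀ v, ‖f v‖ ≤ g v) ∧ (∀ v, g v ≤ C) ∧
      ∀ v : V, children par v ≠ ∅ → HasSum (fun u : ↥(children par v) => g u.1) (g v) := by
  let L := ∑' v : {v : V // IsLeafV par v}, (‖f v.1‖₊ : ℝ≥0∞)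
  let M := ⨆ n : ℕ, ∑' v : {v : V // gen v = (n : ℤ)}, (‖f v.1‖₊ : ℝ≥0∞)
  have hLM : L + M < ⊤ := ENNReal.add_lt_top.2 ⟨h1, h2⟩
  have hmono : ∀ v, Monotone fun n => tv par f n v := fun v =>
    monotone_nat_of_le_succ fun n => tv_mono hflow n v
  let G : V → ℝ≥0∞ := fun v => ⨆ n, tv par f n v
  have hG : ∀ v, G v ≤ L + M := by
    intro v
    refine iSup_le fun n => ?_
    obtain ⟨k, hk⟩ : ∃ k : ℕ, (k : ℤ) = gen v + ((n + (gen v).natAbs : ℕ) : ℤ) :=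
      ⟨(gen v + ((n + (gen v).natAbs : ℕ) : ℤ)).toNat, by omega⟩
    refine (hmono v (Nat.le_add_right n (gen v).natAbs)).trans ((tv_bound hgen _ v).trans ?_)
    have hL : L = ∑' u : V, if IsLeafV par u then ‖f u‖ₑ else 0 :=
      (tsum_subtype {u | IsLeafV par u} (fun u => ‖f u‖ₑ)).trans (tsum_congr fun u => by
        simp [Set.indicator_apply])
    have hM : (∑' u : V, if gen u = (k : ℤ) then ‖f u‖ₑ else 0) ≤ M :=
      le_trans (le_of_eq ((tsum_subtype {u | gen u = (k : ℤ)} (fun u => ‖f u‖ₑ)).trans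
        (tsum_congr fun u => by simp [Set.indicator_apply])).symm)
        (le_iSup (fun n : ℕ => ∑' v : {v : V // gen v = (n : ℤ)}, (‖f v.1‖₊ : ℝ≥0∞)) k)
    refine le_trans ?_ (add_le_add hL.ge hM)
    rw [← ENNReal.tsum_add]
    refine ENNReal.tsum_le_tsum fun u => ?_
    by_cases hl : IsLeafV par u
    · simp only [hl, if_true]
      refine le_trans ?_ (le_add_of_nonneg_right zero_le)
      split_ifs
      · exact le_rfl
      · exact zero_le
    · simp only [hl, false_or, if_false, zero_add, ← hk]
      split_ifs with ha hb hb
      · exact le_rfl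
      · exact absurd ha.2 hb
      · exact zero_le
      · exact le_rfl
  have hGt : ∀ v, G v ≠ ⊤ := fun v => ((hG v).trans_lt hLM).ne
  have hGflow : ∀ v, children par v ≠ ∅ → ∑' u : ↥(children par v), G u.1 = G v := by
    intro v hv
    have e : G v = ⨆ n, tv par f (n + 1) v :=
      ((hmono v).iSup_nat_add 1).symm
    rw [e]
    simp only [G, tv, hv, if_false]
    exact tsum_iSup_mono (F := fun n (u : ↥(children par v)) => tv par f n u.1)
      (fun a b hab u => hmono u.1 hab)
  refine ⟨fun v => (G v).toReal, (L + M).toReal, ?_, ?_, ?_⟩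
  · intro v
    have : ‖f v‖ₑ ≤ G v := le_iSup (fun n => tv par f n v) 0
    have := ENNReal.toReal_mono (hGt v) this
    simpa using this
  · exact fun v => ENNReal.toReal_mono hLM.ne (hG v)
  · intro v hv
    have e := hGflow v hv
    have hne : ∑' u : ↥(children par v), G u.1 ≠ ⊤ := by
      rw [e]
      exact hGt v
    have := ENNReal.hasSum_toReal hne
    rwa [← ENNReal.tsum_toReal_eq (fun u : ↥(children par v) => hGt u.1), e] at this

theorem exists_signed {par : V → Option V} (hTree : IsDirectedTree par)
    {gen : V → ℤ} (hgen : ∀ u v : V, par v = some u → gen v = gen u + 1) (v₀ : V)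
    (f g : V → ℝ) (C : ℝ) (hfg : ∀ v, ‖f v‖ ≤ g v) (hC : ∀ v, g v ≤ C)
    (hf : ∀ v : V, children par v ≠ ∅ →
      HasSum (fun u : ↥(children par v) => f u.1) (f v))
    (hg : ∀ v : V, children par v ≠ ∅ →
      HasSum (fun u : ↥(children par v) => g u.1) (g v)) :
    ∃ m : SignedMeasure (TreeBoundary par), ∀ v, m (boundaryThrough par v) = f v := by
  have hab : ∀ v, |f v| ≤ g v := hfg
  obtain ⟨μ, hμ, hμ'⟩ := exists_measure hTree hgen v₀ (fun v => g v + f v)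
    (fun v => by have := abs_le.1 (hab v); linarith) (C + C)
    (fun v => by have := abs_le.1 (hab v); have := hC v; linarith)
    (fun v hv => (hg v hv).add (hf v hv))
  obtain ⟨ν, hν, hν'⟩ := exists_measure hTree hgen v₀ g
    (fun v => (abs_nonneg _).trans (hab v)) C hC hg
  refine ⟨μ.toSignedMeasure - ν.toSignedMeasure, fun v => ?_⟩
  rw [Measure.toSignedMeasure_sub_apply (measurableSet_through par v), measureReal_def,
    measureReal_def, hμ', hν', ENNReal.toReal_ofReal, ENNReal.toReal_ofReal]
  · ring
  · exact (abs_nonneg _).trans (hab v)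
  · have := abs_le.1 (hab v)
    linarith

theorem sufficiency {𝕜 : Type*} [RCLike 𝕜] {par : V → Option V} (hTree : IsDirectedTree par)
    {gen : V → ℤ} (hgen : ∀ u v : V, par v = some u → gen v = gen u + 1) (v₀ : V)
    {f : V → 𝕜} (hflow : ∀ v : V, children par v ≠ ∅ →
      HasSum (fun u : ↥(children par v) => f u.1) (f v))
    (h1 : (∑' v : {v : V // IsLeafV par v}, (‖f v.1‖₊ : ℝ≥0∞)) < ⊤)
    (h2 : (⨆ n : ℕ, ∑' v : {v : V // gen v = (n : ℤ)}, (‖f v.1‖₊ : ℝ≥0∞)) < ⊤) :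
    ∃ m : VectorMeasure (TreeBoundary par) 𝕜, ∀ v : V, m (boundaryThrough par v) = f v := by
  obtain ⟨g, C, hfg, hC, hg⟩ := exists_dominating hgen hflow h1 h2
  obtain ⟨s, hs⟩ := exists_signed hTree hgen v₀ (fun v => RCLike.re (f v)) g C
    (fun v => (RCLike.abs_re_le_norm _).trans (hfg v)) hC
    (fun v hv => (hflow v hv).map (RCLike.re : 𝕜 →+ ℝ) RCLike.continuous_re) hg
  obtain ⟨t, ht⟩ := exists_signed hTree hgen v₀ (fun v => RCLike.im (f v)) g C
    (fun v => (RCLike.abs_im_le_norm _).trans (hfg v)) hC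
    (fun v hv => (hflow v hv).map (RCLike.im : 𝕜 →+ ℝ) RCLike.continuous_im) hg
  let J : ℝ →+ 𝕜 := (algebraMap ℝ 𝕜 : ℝ →+* 𝕜)
  have hJ : Continuous J := RCLike.continuous_ofReal
  let J' : ℝ →+ 𝕜 := (AddMonoidHom.mulRight (RCLike.I : 𝕜)).comp J
  have hJ' : Continuous J' := hJ.mul continuous_const
  refine ⟨s.mapRange J hJ + t.mapRange J' hJ', fun v => ?_⟩
  have : (s.mapRange J hJ + t.mapRange J' hJ') (boundaryThrough par v) =
      ((s (boundaryThrough par v) : ℝ) : 𝕜) +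
        ((t (boundaryThrough par v) : ℝ) : 𝕜) * RCLike.I := rfl
  rw [this, hs, ht]
  exact RCLike.re_add_im (f v)

/-- Proposition 11.4 / `p-miflows`: a flow `f` on a directed tree is
induced by a (finite) `𝕜`-valued Borel measure on the boundary `∂T` if and only if
`∑_{v ∈ L(V)} |f v| < ∞` and `sup_{n ≥ 0} ∑_{v ∈ gen_n} |f v| < ∞`; and in that case the
measure is uniquely determined by `f`. -/
theorem statement19
    {𝕜 : Type*} [RCLike 𝕜] {V : Type*} (par : V → Option V) (hTree : IsDirectedTree par)
    -- generations (for rooted trees the root lies in generation 0; for unrooted trees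
    -- they are enumerated with respect to a fixed vertex in generation 0)
    (gen : V → ℤ) (hgen : ∀ u v : V, par v = some u → gen v = gen u + 1)
    (hgenroot : ∀ r : V, IsRoot par r → gen r = 0) (hgen0 : ∃ v₀ : V, gen v₀ = 0)
    -- `f` is a flow
    (f : V → 𝕜)
    (hflow : ∀ v : V, children par v ≠ ∅ →
      HasSum (fun u : ↥(children par v) => f u.1) (f v)) :
    ((∃ m : MeasureTheory.VectorMeasure (TreeBoundary par) 𝕜,
        ∀ v : V, m (boundaryThrough par v) = f v) ↔
      ((∑' v : {v : V // IsLeafV par v}, (‖f v.1‖₊ : ℝ≥0∞)) < ⊤ ∧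
        (⨆ n : ℕ, ∑' v : {v : V // gen v = (n : ℤ)}, (‖f v.1‖₊ : ℝ≥0∞)) < ⊤)) ∧
    ∀ m₁ m₂ : MeasureTheory.VectorMeasure (TreeBoundary par) 𝕜,
      (∀ v : V, m₁ (boundaryThrough par v) = f v) →
      (∀ v : V, m₂ (boundaryThrough par v) = f v) → m₁ = m₂ := by
  obtain ⟨v₀, -⟩ := hgen0
  refine ⟨⟨?_, ?_⟩, ?_⟩
  · rintro ⟨m, hm⟩
    exact necessity hgen m hm
  · rintro ⟨h1, h2⟩
    exact sufficiency hTree hgen v₀ hflow h1 h2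
  · intro m₁ m₂ hm₁ hm₂
    exact unique_measure hTree v₀ m₁ m₂ fun v => (hm₁ v).trans (hm₂ v).symm
end PaperTree
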